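/- arXiv:2409.13487 — 3 statements merged into one kernel-verified Lean document; each statement's English description precedes it below -/
import Mathlib

section
/- If an R-module F is a direct summand of an R-module G fitting into a short exact sequence 0 → R^(α) → G → R_S^(β) → 0 for some cardinals α and β, then the projective dimension of F is at most the projective dimension of R_S. -/
open CategoryTheory

universe u

variable (R : Type u) [CommRing R]

/-- `Ext^n_R(M, N) = 0`. -/
def extVanish (n : ℕ) (M N : Type u) [AddCommGroup M] [Module R M]
    [AddCommGroup N] [Module R N] : Prop :=
  Subsingleton (((Ext R (ModuleCat.{u} R) n).obj
    (Opposite.op (ModuleCat.of R M))).obj (ModuleCat.of R N))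

/-- `C` is `S`-weakly cotorsion if `Ext^1_R(R_S, C) = 0`. -/
def IsWeaklyCotorsion (S : Submonoid R) (C : Type u) [AddCommGroup C] [Module R C] : Prop :=
  extVanish R 1 (Localization S) C

/-- `F` is `S`-strongly flat if `Ext^1_R(F, C) = 0` for all `S`-weakly cotorsion `C`. -/
def IsStronglyFlat (S : Submonoid R) (F : Type u) [AddCommGroup F] [Module R F] : Prop :=
  ∀ (C : Type u) [AddCommGroup C] [Module R C], IsWeaklyCotorsion R S C → extVanish R 1 F C

theorem ext_iff_aux (n : ℕ) (X Y : ModuleCat.{u} R) :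
    Subsingleton (((Ext R (ModuleCat.{u} R) (n+1)).obj (Opposite.op X)).obj Y) ↔
      Subsingleton (Abelian.Ext X Y (n + 1)) := by
  let P := projectiveResolution X
  trans ∀ f : P.complex.X (n+1) ⟶ Y, P.complex.d (n+2) (n+1) ≫ f = 0 →
      ∃ g : P.complex.X n ⟶ Y, P.complex.d (n+1) n ≫ g = f
  · rw [(P.isoExt (R := R) (n+1) Y).toLinearEquiv.toEquiv.subsingleton_congr,
      ← ModuleCat.isZero_iff_subsingleton, ← HomologicalComplex.exactAt_iff_isZero_homology,
      HomologicalComplex.exactAt_iff' _ n (n+1) (n+2) (by simp) (by simp),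
      ShortComplex.moduleCat_exact_iff]
    exact Iff.rfl
  · constructor
    · intro h
      suffices ∀ e : Abelian.Ext X Y (n+1), e = 0 from ⟨fun a b => by rw [this a, this b]⟩
      intro e
      obtain ⟨f, hf, rfl⟩ := P.extMk_surjective e (n+2) rfl
      rw [P.extMk_eq_zero_iff f (n+2) rfl hf n rfl]
      exact h f hf
    · intro h f hf
      rw [← P.extMk_eq_zero_iff f (n+2) rfl hf n rfl]
      exact Subsingleton.elim _ _

theorem pd_iff_aux (n : ℕ) (M : Type u) [AddCommGroup M] [Module R M] :
    (∀ (N : Type u) [AddCommGroup N] [Module R N], extVanish R (n + 1) M N) ↔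
      HasProjectiveDimensionLT (ModuleCat.of R M) (n + 1) := by
  constructor
  · intro h
    apply hasProjectiveDimensionLT_of_enoughInjectives
    intro Y
    exact (ext_iff_aux R n _ Y).1 (h Y)
  · intro h N _ _
    exact (ext_iff_aux R n _ _).2 (HasProjectiveDimensionLT.subsingleton _ (n+1) _ le_rfl _)

theorem shortExact_aux {A B C : Type u} [AddCommGroup A] [Module R A] [AddCommGroup B] [Module R B]
    [AddCommGroup C] [Module R C] (f : A →ₗ[R] B) (g : B →ₗ[R] C) (hf : Function.Injective f)
    (hg : Function.Surjective g) (hfg : Function.Exact f g) :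
    ∃ w, (ShortComplex.mk (ModuleCat.ofHom f) (ModuleCat.ofHom g) w).ShortExact := by
  refine ⟨?_, ?_⟩
  · ext x
    exact hfg.apply_apply_eq_zero x
  · exact { exact := (ShortComplex.ShortExact.moduleCat_exact_iff_function_exact _).2 hfg
            mono_f := (ModuleCat.mono_iff_injective _).2 hf
            epi_g := (ModuleCat.epi_iff_surjective _).2 hg }

theorem finsupp_shortExact_aux (β : Type u) {A B C : Type u} [AddCommGroup A] [Module R A]
    [AddCommGroup B] [Module R B]
    [AddCommGroup C] [Module R C] (f : A →ₗ[R] B) (g : B →ₗ[R] C) (hf : Function.Injective f)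
    (hg : Function.Surjective g) (hfg : Function.Exact f g) :
    ∃ w, (ShortComplex.mk (ModuleCat.ofHom (Finsupp.mapRange.linearMap (α := β) f))
      (ModuleCat.ofHom (Finsupp.mapRange.linearMap (α := β) g)) w).ShortExact := by
  apply shortExact_aux
  · exact Finsupp.mapRange_injective _ (map_zero f) hf
  · exact Finsupp.mapRange_surjective _ (map_zero g) hg
  · rw [LinearMap.exact_iff, Finsupp.ker_mapRange,
      Finsupp.range_mapRange_linearMap _ (LinearMap.ker_eq_bot.2 hf), LinearMap.exact_iff.1 hfg]

theorem pd_finsupp_aux (β : Type u) (n : ℕ) : ∀ (M : Type u) [AddCommGroup M] [Module R M],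
    HasProjectiveDimensionLT (ModuleCat.of R M) (n + 1) →
    HasProjectiveDimensionLT (ModuleCat.of R (β →₀ M)) (n + 1) := by
  induction n with
  | zero =>
    intro M _ _ h
    rw [zero_add, ← projective_iff_hasProjectiveDimensionLT_one] at h ⊢
    rw [← IsProjective.iff_projective] at h ⊢
    have h' : Module.Projective R M := h
    classical
    exact Module.Projective.of_equiv (finsuppLequivDFinsupp R (ι := β) (M := M)).symm
  | succ n ih =>
    intro M _ _ h
    let g : (M →₀ R) →ₗ[R] M := Finsupp.linearCombination R id
    have hg : Function.Surjective g := Finsupp.linearCombination_id_surjective R M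
    let f : LinearMap.ker g →ₗ[R] (M →₀ R) := (LinearMap.ker g).subtype
    have hf : Function.Injective f := Subtype.val_injective
    have hfg : Function.Exact f g := LinearMap.exact_subtype_ker_map g
    obtain ⟨w, hw⟩ := shortExact_aux R (A := LinearMap.ker g) f g hf hg hfg
    have hP : Projective (ModuleCat.of R (M →₀ R)) := by
      rw [← IsProjective.iff_projective]; infer_instance
    have hP' : Projective (ModuleCat.of R (β →₀ (M →₀ R))) := by
      rw [← IsProjective.iff_projective]; infer_instance
    have h1 := ih _ ((hw.hasProjectiveDimensionLT_X₃_iff n hP).1 h)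
    obtain ⟨w', hw'⟩ := finsupp_shortExact_aux R β (A := LinearMap.ker g) f g hf hg hfg
    exact (hw'.hasProjectiveDimensionLT_X₃_iff n hP').2 h1

/-- If `F` is a direct summand of a module `G` fitting in a short exact sequence
`0 → R^(α) → G → R_S^(β) → 0`, then `pd_R F ≤ pd_R R_S`. -/
theorem pd_le_of_summand (S : Submonoid R) (F G : Type u)
    [AddCommGroup F] [Module R F] [AddCommGroup G] [Module R G]
    (α β : Type u)
    (f : (α →₀ R) →ₗ[R] G) (g : G →ₗ[R] (β →₀ Localization S))
    (hf : Function.Injective f) (hg : Function.Surjective g) (hfg : Function.Exact f g)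
    (i : F →ₗ[R] G) (p : G →ₗ[R] F) (hip : p.comp i = LinearMap.id) :
    ∀ n : ℕ,
      (∀ (N : Type u) [AddCommGroup N] [Module R N], extVanish R (n + 1) (Localization S) N) →
      (∀ (N : Type u) [AddCommGroup N] [Module R N], extVanish R (n + 1) F N) := by
  intro n h
  rw [pd_iff_aux] at h ⊢
  obtain ⟨w, hw⟩ := shortExact_aux R f g hf hg hfg
  have hP : Projective (ModuleCat.of R (α →₀ R)) := by
    rw [← IsProjective.iff_projective]; infer_instance
  have hG : HasProjectiveDimensionLT (ModuleCat.of R G) (n + 1) :=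
    hw.hasProjectiveDimensionLT_X₂ (n + 1)
      (hasProjectiveDimensionLT_of_ge (ModuleCat.of R (α →₀ R)) 1 _ (by omega))
      (pd_finsupp_aux R β n _ h)
  exact Retract.hasProjectiveDimensionLT (Y := ModuleCat.of R G)
    ⟨ModuleCat.ofHom i, ModuleCat.ofHom p, by
      rw [← ModuleCat.ofHom_comp, hip]; rfl⟩ (n + 1)
end

section
/- If the projective dimension of R_S as an R-module is at most 1, then the class of S-strongly flat R-modules is resolving, i.e., it contains the projectives and is closed under extensions and kernels of epimorphisms between S-strongly flat modules. -/
open CategoryTheory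

universe u

variable (R : Type u) [CommRing R]

/-- The two versions of `Ext` vanish simultaneously. -/
lemma extVanish_succ_iff (n : ℕ) (M N : Type u) [AddCommGroup M] [Module R M]
    [AddCommGroup N] [Module R N] :
    extVanish R (n+1) M N ↔
      Subsingleton (Abelian.Ext.{u} (ModuleCat.of R M) (ModuleCat.of R N) (n+1)) := by
  let P := ProjectiveResolution.of (ModuleCat.of R M)
  have h1 : Subsingleton (Abelian.Ext.{u} (ModuleCat.of R M) (ModuleCat.of R N) (n+1)) ↔
      ∀ f : P.complex.X (n+1) ⟶ ModuleCat.of R N, P.complex.d (n+2) (n+1) ≫ f = 0 →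
        ∃ g : P.complex.X n ⟶ ModuleCat.of R N, P.complex.d (n+1) n ≫ g = f := by
    constructor
    · intro hs f hf
      exact (P.extMk_eq_zero_iff f (n+2) rfl hf n rfl).1 (Subsingleton.elim _ _)
    · intro H
      refine subsingleton_of_forall_eq 0 fun α => ?_
      obtain ⟨f, hf, rfl⟩ := P.extMk_surjective α (n+2) rfl
      exact (P.extMk_eq_zero_iff f (n+2) rfl hf n rfl).2 (H f hf)
  rw [h1]
  unfold extVanish
  rw [← ModuleCat.isZero_iff_subsingleton, (P.isoExt (R := R) (n+1) (ModuleCat.of R N)).isZero_iff,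
    ← HomologicalComplex.exactAt_iff_isZero_homology,
    HomologicalComplex.exactAt_iff' _ n (n+1) (n+2) (by simp) (by simp),
    ShortComplex.moduleCat_exact_iff]
  exact Iff.rfl

lemma shortExact_of_linearMap {A B C : Type u} [AddCommGroup A] [Module R A] [AddCommGroup B]
    [Module R B] [AddCommGroup C] [Module R C] (f : A →ₗ[R] B) (g : B →ₗ[R] C)
    (hf : Function.Injective f) (hg : Function.Surjective g) (hfg : Function.Exact f g) :
    (ModuleCat.shortComplexOfCompEqZero f g hfg.linearMap_comp_eq_zero).ShortExact :=
  ModuleCat.shortComplex_shortExact _ hfg hf hg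

/-- If `pd R_S ≤ 1`, then `Ext^2(F, D) = 0` for `F` strongly flat and any `D`. -/
lemma ext_two_vanish (S : Submonoid R)
    (h : ∀ (N : Type u) [AddCommGroup N] [Module R N], extVanish R 2 (Localization S) N)
    (F : Type u) [AddCommGroup F] [Module R F] (hF : IsStronglyFlat R S F) (D : ModuleCat.{u} R) :
    Subsingleton (Abelian.Ext.{u} (ModuleCat.of R F) D 2) := by
  let T : ShortComplex (ModuleCat.{u} R) :=
    ShortComplex.mk (Injective.ι D) (Limits.cokernel.π (Injective.ι D)) (by simp)
  have hT : T.ShortExact :=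
    { exact := ShortComplex.exact_cokernel _
      mono_f := inferInstanceAs (Mono (Injective.ι D))
      epi_g := inferInstanceAs (Epi (Limits.cokernel.π _)) }
  haveI : Injective T.X₂ := inferInstanceAs (Injective (Injective.under D))
  have hQ : IsWeaklyCotorsion R S T.X₃ := by
    refine (extVanish_succ_iff R 0 _ _).2 (subsingleton_of_forall_eq 0 fun x => ?_)
    have h2 := (extVanish_succ_iff R 1 _ _).1 (h D)
    obtain ⟨y, rfl⟩ := Abelian.Ext.covariant_sequence_exact₃ _ hT x (n₁ := 2) rfl
      (h2.elim _ _)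
    rw [Abelian.Ext.eq_zero_of_injective y]
    simp
  have h1 := (extVanish_succ_iff R 0 _ _).1 (hF _ hQ)
  refine subsingleton_of_forall_eq 0 fun x => ?_
  obtain ⟨y, rfl⟩ := Abelian.Ext.covariant_sequence_exact₁ _ hT x
    (Abelian.Ext.eq_zero_of_injective _) (n₀ := 1) rfl
  rw [show y = 0 from h1.elim _ _]
  simp

/-- If `pd_R R_S ≤ 1` then the class of `S`-strongly flat modules is resolving:
it contains the projectives and is closed under extensions and kernels of
epimorphisms between `S`-strongly flat modules. -/
theorem stronglyFlat_resolving_of_pd_le_one (S : Submonoid R)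
    (h : ∀ (N : Type u) [AddCommGroup N] [Module R N], extVanish R 2 (Localization S) N) :
    (∀ (P : Type u) [AddCommGroup P] [Module R P],
        Module.Projective R P → IsStronglyFlat R S P) ∧
    (∀ (A B C : Type u) [AddCommGroup A] [Module R A] [AddCommGroup B] [Module R B]
        [AddCommGroup C] [Module R C] (f : A →ₗ[R] B) (g : B →ₗ[R] C),
        Function.Injective f → Function.Surjective g → Function.Exact f g →
        IsStronglyFlat R S A → IsStronglyFlat R S C → IsStronglyFlat R S B) ∧
    (∀ (A B C : Type u) [AddCommGroup A] [Module R A] [AddCommGroup B] [Module R B]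
        [AddCommGroup C] [Module R C] (f : A →ₗ[R] B) (g : B →ₗ[R] C),
        Function.Injective f → Function.Surjective g → Function.Exact f g →
        IsStronglyFlat R S B → IsStronglyFlat R S C → IsStronglyFlat R S A) := by
  refine ⟨?_, ?_, ?_⟩
  · intro P _ _ hP C _ _ _
    haveI : Projective (ModuleCat.of R P) := (IsProjective.iff_projective P).1 hP
    exact ModuleCat.isZero_iff_subsingleton.1
      (isZero_Ext_succ_of_projective (ModuleCat.of R P) (ModuleCat.of R C) 0)
  · intro A B C _ _ _ _ _ _ f g hf hg hfg hA hC D _ _ hD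
    have hE := shortExact_of_linearMap R f g hf hg hfg
    have h1 := (extVanish_succ_iff R 0 _ _).1 (hA D hD)
    have h3 := (extVanish_succ_iff R 0 _ _).1 (hC D hD)
    refine (extVanish_succ_iff R 0 _ _).2 (subsingleton_of_forall_eq 0 fun x => ?_)
    obtain ⟨y, rfl⟩ := Abelian.Ext.contravariant_sequence_exact₂ hE _ x (h1.elim _ _)
    rw [show y = 0 from h3.elim _ _]
    simp
  · intro A B C _ _ _ _ _ _ f g hf hg hfg hB hC D _ _ hD
    have hE := shortExact_of_linearMap R f g hf hg hfg
    have h2 := (extVanish_succ_iff R 0 _ _).1 (hB D hD)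
    have h3 := ext_two_vanish R S h C hC (ModuleCat.of R D)
    refine (extVanish_succ_iff R 0 _ _).2 (subsingleton_of_forall_eq 0 fun x => ?_)
    obtain ⟨y, rfl⟩ := Abelian.Ext.contravariant_sequence_exact₁ hE _ x (n₁ := 2) rfl
      (h3.elim _ _)
    rw [show y = 0 from h2.elim _ _]
    simp
end

section
/- Suppose the first syzygy of R_S is S-strongly flat. If 0 → A → B → C → 0 is exact, B is S-strongly flat, and C is not S-strongly flat, then S-sfd(C) = S-sfd(A) + 1. -/
open CategoryTheory

universe u

variable (R : Type u) [CommRing R]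

/-- The `S`-strongly flat dimension of `M`: the smallest `n` with
`Ext^{n+1}_R(M, C) = 0` for every `S`-weakly cotorsion `C`, or `∞` otherwise. -/
noncomputable def sfdim (S : Submonoid R) (M : Type u) [AddCommGroup M] [Module R M] : ℕ∞ :=
  sInf {n : ℕ∞ | ∃ m : ℕ, n = m ∧
    ∀ (C : Type u) [AddCommGroup C] [Module R C],
      IsWeaklyCotorsion R S C → extVanish R (m + 1) M C}

theorem extVanish_iff (n : ℕ) (M N : Type u) [AddCommGroup M] [Module R M]
    [AddCommGroup N] [Module R N] :
    extVanish R (n + 1) M N ↔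
      Subsingleton (Abelian.Ext.{u} (ModuleCat.of R M) (ModuleCat.of R N) (n + 1)) := by
  let Q := ProjectiveResolution.of (ModuleCat.of R M)
  have key1 : extVanish R (n + 1) M N ↔
      ∀ φ : Q.complex.X (n + 1) ⟶ ModuleCat.of R N, Q.complex.d (n + 2) (n + 1) ≫ φ = 0 →
        ∃ ψ : Q.complex.X n ⟶ ModuleCat.of R N, Q.complex.d (n + 1) n ≫ ψ = φ := by
    unfold extVanish
    rw [← ModuleCat.isZero_iff_subsingleton,
      (Q.isoExt (R := R) (n + 1) (ModuleCat.of R N)).isZero_iff,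
      ← HomologicalComplex.exactAt_iff_isZero_homology,
      HomologicalComplex.exactAt_iff' _ n (n + 1) (n + 2) (by simp) (by simp),
      ShortComplex.moduleCat_exact_iff]
    exact Iff.rfl
  rw [key1]
  constructor
  · intro h
    refine subsingleton_of_forall_eq 0 fun α => ?_
    obtain ⟨φ, hφ, rfl⟩ := Q.extMk_surjective α (n + 2) rfl
    exact (Q.extMk_eq_zero_iff φ (n + 2) rfl hφ n rfl).2 (h φ hφ)
  · intro h φ hφ
    exact (Q.extMk_eq_zero_iff φ (n + 2) rfl hφ n rfl).1 (Subsingleton.elim _ _)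

section shift

variable {D : Type*} [Category* D] [Abelian D] [HasExt.{u} D]

/-- Covariant shift: `Ext^{n+2}(X, S₁) = 0` iff `Ext^{n+1}(X, S₃) = 0` for `S₂` injective. -/
theorem ext_shift_cov {T : ShortComplex D} (hT : T.ShortExact) [Injective T.X₂] (X : D) (n : ℕ) :
    Subsingleton (Abelian.Ext.{u} X T.X₁ (n + 2)) ↔
      Subsingleton (Abelian.Ext.{u} X T.X₃ (n + 1)) := by
  constructor
  · intro h
    refine subsingleton_of_forall_eq 0 fun x => ?_
    obtain ⟨y, rfl⟩ := Abelian.Ext.covariant_sequence_exact₃ X hT x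
      (n₁ := n + 2) rfl (Subsingleton.elim _ _)
    rw [Abelian.Ext.eq_zero_of_injective y]
    simp
  · intro h
    refine subsingleton_of_forall_eq 0 fun x => ?_
    obtain ⟨y, rfl⟩ := Abelian.Ext.covariant_sequence_exact₁ X hT x
      (Abelian.Ext.eq_zero_of_injective _) (n₀ := n + 1) rfl
    rw [Subsingleton.elim y 0]
    simp

/-- Contravariant shift, given vanishing on the middle term. -/
theorem ext_shift_contra {T : ShortComplex D} (hT : T.ShortExact) (Y : D) (n : ℕ)
    (h1 : Subsingleton (Abelian.Ext.{u} T.X₂ Y (n + 1)))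
    (h2 : Subsingleton (Abelian.Ext.{u} T.X₂ Y (n + 2))) :
    Subsingleton (Abelian.Ext.{u} T.X₃ Y (n + 2)) ↔
      Subsingleton (Abelian.Ext.{u} T.X₁ Y (n + 1)) := by
  constructor
  · intro h
    refine subsingleton_of_forall_eq 0 fun x => ?_
    obtain ⟨y, rfl⟩ := Abelian.Ext.contravariant_sequence_exact₁ hT Y x
      (n₁ := n + 2) (by omega) (Subsingleton.elim _ _)
    rw [Subsingleton.elim y 0]
    simp
  · intro h
    refine subsingleton_of_forall_eq 0 fun x => ?_
    obtain ⟨y, rfl⟩ := Abelian.Ext.contravariant_sequence_exact₃ hT Y x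
      (Subsingleton.elim _ _) (n₀ := n + 1) (by omega)
    rw [Subsingleton.elim y 0]
    simp

end shift

/-- The short complex of a short exact sequence of modules. -/
theorem exists_shortExact {A B C : Type u} [AddCommGroup A] [Module R A] [AddCommGroup B]
    [Module R B] [AddCommGroup C] [Module R C] (f : A →ₗ[R] B) (g : B →ₗ[R] C)
    (hf : Function.Injective f) (hg : Function.Surjective g) (hfg : Function.Exact f g) :
    (ShortComplex.mk (ModuleCat.ofHom f) (ModuleCat.ofHom g)
      (by ext x; exact hfg.apply_apply_eq_zero x)).ShortExact where
  exact := (ShortComplex.ShortExact.moduleCat_exact_iff_function_exact _).mpr hfg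
  mono_f := (ModuleCat.mono_iff_injective _).2 hf
  epi_g := (ModuleCat.epi_iff_surjective _).2 hg

/-- Every module has a cosyzygy, shifting Ext. -/
theorem exists_cosyzygy (N : Type u) [AddCommGroup N] [Module R N] :
    ∃ N' : ModuleCat.{u} R, ∀ (M : Type u) [AddCommGroup M] [Module R M] (n : ℕ),
      extVanish R (n + 2) M N ↔ extVanish R (n + 1) M N' := by
  obtain ⟨I, _, j, _⟩ := (EnoughInjectives.presentation (ModuleCat.of R N)).some
  let T := ShortComplex.mk j (Limits.cokernel.π j) (by simp)
  have hT : T.ShortExact :=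
    { exact := ShortComplex.exact_of_g_is_cokernel _ (Limits.cokernelIsCokernel j) }
  have : Injective T.X₂ := by assumption
  refine ⟨T.X₃, fun M _ _ n => ?_⟩
  rw [extVanish_iff, extVanish_iff]
  exact ext_shift_cov hT _ n

theorem stronglyFlat_ext (S : Submonoid R)
    (hS : ∀ (C : Type u) [AddCommGroup C] [Module R C], IsWeaklyCotorsion R S C →
      extVanish R 2 (Localization S) C)
    (B : Type u) [AddCommGroup B] [Module R B] (hB : IsStronglyFlat R S B) (n : ℕ) :
    ∀ (C : Type u) [AddCommGroup C] [Module R C], IsWeaklyCotorsion R S C →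
      extVanish R (n + 1) B C := by
  induction n with
  | zero => exact hB
  | succ n ih =>
    intro C _ _ hC
    obtain ⟨C', hC'⟩ := exists_cosyzygy R C
    exact (hC' B n).2 (ih C' ((hC' (Localization S) 0).1 (hS C hC)))

/-- If the first syzygy of `R_S` is `S`-strongly flat, `0 → A → B → C → 0` is exact,
`B` is `S`-strongly flat and `C` is not, then `S-sfd(C) = S-sfd(A) + 1`. -/
theorem sfdim_right_eq_add_one (S : Submonoid R) (H P : Type u)
    [AddCommGroup H] [Module R H] [AddCommGroup P] [Module R P]
    (i : H →ₗ[R] P) (p : P →ₗ[R] Localization S)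
    (hi : Function.Injective i) (hp : Function.Surjective p) (hip : Function.Exact i p)
    (hP : Module.Projective R P) (hH : IsStronglyFlat R S H)
    (A B C : Type u) [AddCommGroup A] [Module R A] [AddCommGroup B] [Module R B]
    [AddCommGroup C] [Module R C] (f : A →ₗ[R] B) (g : B →ₗ[R] C)
    (hf : Function.Injective f) (hg : Function.Surjective g) (hfg : Function.Exact f g)
    (hB : IsStronglyFlat R S B) (hC : ¬ IsStronglyFlat R S C) :
    sfdim R S C = sfdim R S A + 1 := by
  have hS : ∀ (C : Type u) [AddCommGroup C] [Module R C], IsWeaklyCotorsion R S C →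
      extVanish R 2 (Localization S) C := by
    intro N _ _ hN
    have : Projective (ModuleCat.of R P) := (IsProjective.iff_projective P).1 hP
    rw [extVanish_iff]
    exact (ext_shift_contra (exists_shortExact R i p hi hp hip) _ 0
      (Abelian.Ext.subsingleton_of_projective _ _ _)
      (Abelian.Ext.subsingleton_of_projective _ _ _)).2
      ((extVanish_iff R 0 H N).1 (hH N hN))
  have key : ∀ m : ℕ,
      (∀ (N : Type u) [AddCommGroup N] [Module R N],
        IsWeaklyCotorsion R S N → extVanish R (m + 1 + 1) C N) ↔
      (∀ (N : Type u) [AddCommGroup N] [Module R N],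
        IsWeaklyCotorsion R S N → extVanish R (m + 1) A N) := by
    intro m
    have aux : ∀ (N : Type u) [AddCommGroup N] [Module R N],
        IsWeaklyCotorsion R S N → (extVanish R (m + 1 + 1) C N ↔ extVanish R (m + 1) A N) := by
      intro N _ _ hN
      rw [extVanish_iff, extVanish_iff]
      exact ext_shift_contra (exists_shortExact R f g hf hg hfg) _ m
        ((extVanish_iff R m B N).1 (stronglyFlat_ext R S hS B hB m N hN))
        ((extVanish_iff R (m + 1) B N).1 (stronglyFlat_ext R S hS B hB (m + 1) N hN))
    exact ⟨fun h N _ _ hN => (aux N hN).1 (h N hN), fun h N _ _ hN => (aux N hN).2 (h N hN)⟩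
  unfold sfdim
  apply le_antisymm
  · by_cases hne : ∃ m : ℕ, ∀ (N : Type u) [AddCommGroup N] [Module R N],
        IsWeaklyCotorsion R S N → extVanish R (m + 1) A N
    · have hmem := csInf_mem (s := {n : ℕ∞ | ∃ m : ℕ, n = m ∧
        ∀ (N : Type u) [AddCommGroup N] [Module R N],
          IsWeaklyCotorsion R S N → extVanish R (m + 1) A N})
        (by obtain ⟨m, hm⟩ := hne; exact ⟨m, m, rfl, hm⟩)
      obtain ⟨m, hm, hm'⟩ := hmem
      rw [hm]
      exact sInf_le ⟨m + 1, by push_cast; rfl, (key m).2 hm'⟩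
    · have : {n : ℕ∞ | ∃ m : ℕ, n = m ∧
        ∀ (N : Type u) [AddCommGroup N] [Module R N],
          IsWeaklyCotorsion R S N → extVanish R (m + 1) A N} = ∅ := by
        ext n
        simp only [Set.mem_ofPred_eq, Set.mem_empty_iff_false, iff_false]
        rintro ⟨m, -, hm⟩
        exact hne ⟨m, hm⟩
      rw [this, sInf_empty]
      simp
  · refine le_sInf ?_
    rintro _ ⟨m, rfl, hm⟩
    cases m with
    | zero => exact absurd hm hC
    | succ m =>
      push_cast
      gcongr
      exact sInf_le ⟨m, rfl, (key m).1 hm⟩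
end
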